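/- (Theorem 1, convergence form) The symmetric-point density evolution map F is continuous and nondecreasing on [0,1] with F([0,1]) ⊆ [0,1], and the density evolution sequence defined by x_0 = 1 and x_{i+1} = F(x_i) is nonincreasing and converges to a limit L which is a fixed point of F satisfying L < 1/N. Hence the residual bit erasure probability of the LT ensemble at the extremal symmetric point does not exceed 1/N. -/

import Mathlib

open Real Filter

noncomputable def qp (p x : ℝ) : ℝ :=
  (Real.sqrt ((1 - p) ^ 2 + 4 * p * x) - (1 - p)) / (2 * p)

noncomputable def aCoeff (p : ℝ) (i : ℕ) : ℝ :=
  (∑ k ∈ Finset.range i, (Nat.choose (2 * i - 1) k : ℝ) * p ^ k) /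
    (i * (1 + p) ^ (2 * i - 1))

noncomputable def Gpart (p : ℝ) (N : ℕ) : ℝ := ∑ i ∈ Finset.Icc 1 N, aCoeff p i

noncomputable def Sp (p x : ℝ) : ℝ := - Real.log (qp p (1 - x))

noncomputable def rhoN (p μ : ℝ) (N : ℕ) (x : ℝ) : ℝ :=
  (μ + (∑ i ∈ Finset.Icc 1 N, aCoeff p i * x ^ i) + x ^ N) / (μ + Gpart p N + 1)

noncomputable def lamBarN (p μ : ℝ) (N : ℕ) (x : ℝ) : ℝ :=
  Real.exp (-(μ + Gpart p N + 1) * rhoN p μ N (1 - x))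

noncomputable def deSym (p μ : ℝ) (N : ℕ) (x : ℝ) : ℝ :=
  ((1 - p) + p * lamBarN p μ N x) * lamBarN p μ N x

noncomputable def cornerMap (p μ : ℝ) (N : ℕ) (α ε₁ ε₂ : ℝ) (y : ℝ) : ℝ :=
  ((1 - p) + p * Real.exp (-(α * (1 - ε₁)))) *
    Real.exp (-(α * (1 - ε₂)) * rhoN p μ N (1 - y))

/-!
Write `S(y) = -log q(1 - y)`, where `q(x) ≥ 0` solves `((1 - p) + p q) q = x`. The coefficients are
chosen so that `S(y) = ∑ aᵢ yⁱ`: the increments of `i aᵢ` are proportional to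
`binom(2n, n) (p / (1 + p)²)ⁿ`, whose generating function is an inverse square root, and summing
them gives exactly `S'`. Moreover `aᵢ ≤ 1 / i`, because `i aᵢ` is a binomial tail probability, so
truncating the series at `N` loses at most `y^(N+1) / ((N+1)(1 - y))`, which is at most `y^N` once
`1 - y ≥ 1 / N`.

At a fixed point `L` the equation `F(L) = L` says `λ̄(L) = q(L)`, that is,
`S(1 - L) = μ + ∑_{i ≤ N} aᵢ (1 - L)ⁱ + (1 - L)^N`. For `L ≥ 1 / N` the right-hand side exceeds the
truncation bound by at least `μ > 0`, a contradiction.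
-/

section PowerSeries

theorem ascPochhammer_eval_one_half (n : ℕ) :
    (ascPochhammer ℝ n).eval (1 / 2) = n.factorial * (n.centralBinom / 4 ^ n) := by
  induction n with
  | zero => simp
  | succ n ih =>
    have hrec : ((n : ℝ) + 1) * (n + 1).centralBinom = 2 * (2 * n + 1) * n.centralBinom := by
      exact_mod_cast Nat.succ_mul_centralBinom_succ n
    rw [ascPochhammer_succ_eval, ih, Nat.factorial_succ, pow_succ]
    push_cast
    field_simp
    linear_combination (-2 : ℝ) * hrec

theorem ring_choose_one_half_add_sub_one (n : ℕ) :
    Ring.choose ((1 / 2 : ℝ) + n - 1) n = n.centralBinom / 4 ^ n := by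
  have h := Ring.factorial_nsmul_multichoose_eq_ascPochhammer (1 / 2 : ℝ) n
  rw [Polynomial.ascPochhammer_smeval_eq_eval, nsmul_eq_mul, ascPochhammer_eval_one_half] at h
  rw [← Ring.multichoose_eq]
  exact mul_left_cancel₀ (by exact_mod_cast n.factorial_ne_zero) h

theorem hasSum_centralBinom_mul_pow {x : ℝ} (hx : |x| < 1 / 4) :
    HasSum (fun n : ℕ => (n.centralBinom : ℝ) * x ^ n) (1 / √(1 - 4 * x)) := by
  have hball : 4 * x ∈ Metric.eball (0 : ℝ) 1 := by
    rw [Metric.mem_eball, edist_zero_right, ← ofReal_norm, ENNReal.ofReal_lt_one, norm_mul,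
      Real.norm_eq_abs, Real.norm_eq_abs, abs_of_pos four_pos]
    linarith
  have h := (one_div_one_sub_rpow_hasFPowerSeriesOnBall_zero (1 / 2)).hasSum hball
  rw [zero_add, ← Real.sqrt_eq_rpow] at h
  refine h.congr_fun fun n => ?_
  rw [FormalMultilinearSeries.ofScalars_apply_eq, ring_choose_one_half_add_sub_one, smul_eq_mul,
    mul_pow]
  field_simp

theorem hasSum_sum_range_succ_mul_pow {d : ℕ → ℝ} {y s : ℝ} (hy : |y| < 1)
    (hd : HasSum (fun n => d n * y ^ n) s) :
    HasSum (fun n => (∑ k ∈ Finset.range (n + 1), d k) * y ^ n) (s / (1 - y)) := by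
  have h := hasSum_sum_range_mul_of_summable_norm hd.summable.norm
    (summable_geometric_of_abs_lt_one hy).norm
  rw [hd.tsum_eq, tsum_geometric_of_abs_lt_one hy, ← div_eq_mul_inv] at h
  refine h.congr_fun fun n => ?_
  rw [Finset.sum_mul]
  refine Finset.sum_congr rfl fun k hk => ?_
  rw [mul_assoc, ← pow_add, Nat.add_sub_cancel' (Finset.mem_range_succ_iff.1 hk)]

theorem hasSum_div_succ_mul_pow_integral {c : ℕ → ℝ} {g : ℝ → ℝ} {r : ℝ} (hr : 0 ≤ r)
    (hg : ∀ t ∈ Set.Icc 0 r, HasSum (fun n => c n * t ^ n) (g t)) :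
    HasSum (fun n : ℕ => c n / (n + 1) * r ^ (n + 1)) (∫ t in 0..r, g t) := by
  have hIcc : ∀ t ∈ Set.uIoc 0 r, t ∈ Set.Icc 0 r := fun t ht =>
    Set.Ioc_subset_Icc_self (Set.uIoc_of_le hr ▸ ht)
  have h := intervalIntegral.hasSum_integral_of_dominated_convergence
    (μ := MeasureTheory.volume) (F := fun n t => c n * t ^ n) (fun n _ => |c n * r ^ n|)
    (fun n => by fun_prop)
    (fun n => Eventually.of_forall fun t ht => ?_)
    (Eventually.of_forall fun _ _ => (hg r ⟨hr, le_rfl⟩).summable.abs)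
    intervalIntegrable_const
    (Eventually.of_forall fun t ht => hg t (hIcc t ht))
  · refine h.congr_fun fun n => ?_
    rw [intervalIntegral.integral_const_mul, integral_pow, zero_pow n.succ_ne_zero, sub_zero]
    ring
  · obtain ⟨ht0, htr⟩ := hIcc t ht
    rw [Real.norm_eq_abs, abs_mul, abs_mul, abs_pow, abs_pow, abs_of_nonneg ht0, abs_of_nonneg hr]
    gcongr

end PowerSeries

theorem antitone_iterate_of_monotoneOn_of_map_le {α : Type*} [Preorder α] {f : α → α} {s : Set α}
    {x : α} (hf : MonotoneOn f s) (hs : Set.MapsTo f s s) (hx : x ∈ s) (hfx : f x ≤ x) :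
    Antitone fun n => f^[n] x := by
  refine antitone_nat_of_succ_le fun n => ?_
  induction n with
  | zero => exact hfx
  | succ n ih =>
    simpa only [Function.iterate_succ_apply'] using
      hf (hs.iterate (n + 1) hx) (hs.iterate n hx) ih

section Coefficients

theorem centralBinom_succ_eq_two_mul_choose (n : ℕ) :
    (n + 1).centralBinom = 2 * (2 * n + 1).choose n := by
  rw [Nat.centralBinom, Nat.mul_succ, Nat.choose_succ_succ, Nat.choose_symm_half, ← two_mul]

theorem sum_range_succ_choose_succ_mul_pow {R : Type*} [CommSemiring R] (n m : ℕ) (p : R) :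
    ∑ k ∈ Finset.range (m + 1), ((n + 1).choose k : R) * p ^ k =
      (1 + p) * ∑ k ∈ Finset.range m, (n.choose k : R) * p ^ k + n.choose m * p ^ m := by
  induction m with
  | zero => simp
  | succ m ih =>
    rw [Finset.sum_range_succ, ih, Finset.sum_range_succ, Nat.choose_succ_succ]
    push_cast
    ring

theorem sum_range_choose_two_mul_add_three {R : Type*} [CommRing R] (i : ℕ) (p : R) :
    ∑ k ∈ Finset.range (i + 2), ((2 * i + 3).choose k : R) * p ^ k =
      (1 + p) ^ 2 * ∑ k ∈ Finset.range (i + 1), ((2 * i + 1).choose k : R) * p ^ k +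
        (1 - p) * ((2 * i + 1).choose i * p ^ (i + 1)) := by
  have hmid : ((2 * i + 2).choose (i + 1) : R) = 2 * (2 * i + 1).choose i := by
    exact_mod_cast congrArg (Nat.cast (R := R)) (centralBinom_succ_eq_two_mul_choose i)
  rw [sum_range_succ_choose_succ_mul_pow, sum_range_succ_choose_succ_mul_pow, hmid,
    Finset.sum_range_succ _ i]
  ring

theorem sum_range_choose_mul_pow_le {p : ℝ} (hp : 0 ≤ p) {m n : ℕ} (hmn : m ≤ n + 1) :
    ∑ k ∈ Finset.range m, (n.choose k : ℝ) * p ^ k ≤ (1 + p) ^ n := by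
  calc ∑ k ∈ Finset.range m, (n.choose k : ℝ) * p ^ k
      ≤ ∑ k ∈ Finset.range (n + 1), (n.choose k : ℝ) * p ^ k :=
        Finset.sum_le_sum_of_subset_of_nonneg (Finset.range_subset_range.2 hmn)
          fun _ _ _ => by positivity
    _ = (1 + p) ^ n := by
        rw [add_comm 1 p, add_pow]
        simp only [one_pow, mul_one, mul_comm]

variable {p : ℝ}

theorem aCoeff_zero (p : ℝ) : aCoeff p 0 = 0 := by
  simp [aCoeff]

theorem aCoeff_nonneg (hp : 0 ≤ p) (i : ℕ) : 0 ≤ aCoeff p i := by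
  unfold aCoeff
  positivity

theorem aCoeff_le_one_div (hp : 0 ≤ p) (i : ℕ) : aCoeff p i ≤ 1 / i := by
  rw [aCoeff, mul_comm (i : ℝ), ← div_div]
  gcongr
  have hi : i ≤ 2 * i - 1 + 1 := by omega
  exact div_le_one_of_le₀ (sum_range_choose_mul_pow_le hp hi) (by positivity)

theorem succ_mul_aCoeff_succ (hp : 1 + p ≠ 0) (i : ℕ) :
    ((i : ℝ) + 1) * aCoeff p (i + 1) = 1 / 2 + (1 - p) / (2 * (1 + p)) *
      ∑ n ∈ Finset.range (i + 1), (n.centralBinom : ℝ) * (p / (1 + p) ^ 2) ^ n := by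
  induction i with
  | zero =>
    simp only [aCoeff, zero_add, Finset.sum_range_one, Nat.choose_zero_right, Nat.centralBinom_zero,
      Nat.cast_zero, Nat.cast_one, pow_zero, pow_one, mul_one, one_mul, Nat.add_one_sub_one]
    field_simp
    ring
  | succ i ih =>
    rw [Finset.sum_range_succ, mul_add, ← add_assoc, ← ih, centralBinom_succ_eq_two_mul_choose,
      aCoeff, aCoeff, show 2 * (i + 1 + 1) - 1 = 2 * i + 3 by omega,
      show 2 * (i + 1) - 1 = 2 * i + 1 by omega, sum_range_choose_two_mul_add_three,
      div_pow, ← pow_mul]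
    push_cast
    field_simp
    ring

/-- The derivative of `Sp p`, in the closed form that sums the series `∑ (n + 1) aₙ₊₁ yⁿ`. -/
noncomputable def SpDeriv (p y : ℝ) : ℝ :=
  (1 / 2 + (1 - p) / (2 * √((1 - p) ^ 2 + 4 * p * (1 - y)))) / (1 - y)

theorem hasSum_succ_mul_aCoeff_succ_mul_pow (hp : 0 ≤ p) {y : ℝ} (hy : |y| < 1) :
    HasSum (fun n : ℕ => ((n + 1) * aCoeff p (n + 1)) * y ^ n) (SpDeriv p y) := by
  have hp1 : 0 < 1 + p := by positivity
  have hθ : p / (1 + p) ^ 2 ≤ 1 / 4 := by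
    rw [div_le_div_iff₀ (by positivity) (by positivity)]
    linarith [sq_nonneg (1 - p)]
  have hθy : |p / (1 + p) ^ 2 * y| < 1 / 4 := by
    rw [abs_mul, abs_of_nonneg (by positivity)]
    calc p / (1 + p) ^ 2 * |y| ≤ 1 / 4 * |y| := by gcongr
      _ < 1 / 4 := mul_lt_of_lt_one_right (by norm_num) hy
  have hdisc : (1 - p) ^ 2 + 4 * p * (1 - y) =
      (1 + p) ^ 2 * (1 - 4 * (p / (1 + p) ^ 2 * y)) := by
    field_simp
    ring
  have hbinom : HasSum (fun n : ℕ => (n.centralBinom * (p / (1 + p) ^ 2) ^ n) * y ^ n)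
      (1 / √(1 - 4 * (p / (1 + p) ^ 2 * y))) := by
    simpa only [mul_pow, mul_assoc] using hasSum_centralBinom_mul_pow hθy
  have h := ((hasSum_geometric_of_abs_lt_one hy).mul_left (1 / 2)).add
    ((hasSum_sum_range_succ_mul_pow hy hbinom).mul_left ((1 - p) / (2 * (1 + p))))
  convert! h using 1
  · funext n
    rw [succ_mul_aCoeff_succ hp1.ne']
    ring
  · rw [SpDeriv, hdisc, Real.sqrt_mul (by positivity), Real.sqrt_sq hp1.le]
    field_simp

end Coefficients

section Soliton

variable {p : ℝ}

theorem qp_pos {x : ℝ} (hp : 0 < p) (hx : 0 < x) : 0 < qp p x := by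
  refine div_pos (sub_pos.2 (Real.lt_sqrt_of_sq_lt ?_)) (by positivity)
  exact lt_add_of_pos_right _ (by positivity)

theorem qp_eq_of_mul_eq {q x : ℝ} (hp : 0 < p) (hq : 0 ≤ (1 - p) + 2 * p * q)
    (h : ((1 - p) + p * q) * q = x) : qp p x = q := by
  have hsq : (1 - p) ^ 2 + 4 * p * x = ((1 - p) + 2 * p * q) ^ 2 := by
    rw [← h]
    ring
  rw [qp, hsq, Real.sqrt_sq hq, add_sub_cancel_left, mul_div_cancel_left₀ _ (by positivity)]

theorem Sp_zero (hp : 0 < p) : Sp p 0 = 0 := by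
  rw [Sp, qp_eq_of_mul_eq (q := 1) hp (by linarith) (by ring), Real.log_one, neg_zero]

theorem hasDerivAt_Sp {y : ℝ} (hp : 0 < p) (hy : y < 1) : HasDerivAt (Sp p) (SpDeriv p y) y := by
  have hx : 0 < 1 - y := sub_pos.2 hy
  have hdisc : 0 < (1 - p) ^ 2 + 4 * p * (1 - y) := by positivity
  have hq := qp_pos hp hx
  have hinner : HasDerivAt (fun y : ℝ => (1 - p) ^ 2 + 4 * p * (1 - y)) (4 * p * -1) y :=
    (((hasDerivAt_id y).const_sub 1).const_mul (4 * p)).const_add _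
  have hqp : HasDerivAt (fun y => qp p (1 - y)) _ y :=
    ((hinner.sqrt hdisc.ne').sub_const (1 - p)).div_const (2 * p)
  refine (hqp.log hq.ne').neg.congr_deriv ?_
  have hsq := Real.sq_sqrt hdisc.le
  have hD : 0 < √((1 - p) ^ 2 + 4 * p * (1 - y)) := Real.sqrt_pos.2 hdisc
  rw [qp] at hq ⊢
  rw [SpDeriv]
  have hnum : 0 < √((1 - p) ^ 2 + 4 * p * (1 - y)) - (1 - p) :=
    (div_pos_iff_of_pos_right (by positivity)).1 hq
  generalize √((1 - p) ^ 2 + 4 * p * (1 - y)) = D at *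
  field_simp
  linear_combination -hsq

theorem Sp_eq_integral {y : ℝ} (hp : 0 < p) (hy : y < 1) :
    Sp p y = ∫ t in 0..y, SpDeriv p t := by
  have hlt : ∀ t ∈ Set.uIcc 0 y, t < 1 := fun t ht => ht.2.trans_lt (max_lt one_pos hy)
  rw [intervalIntegral.integral_eq_sub_of_hasDerivAt
    (fun t ht => hasDerivAt_Sp hp (hlt t ht)), Sp_zero hp, sub_zero]
  refine ContinuousOn.intervalIntegrable fun t ht => ContinuousAt.continuousWithinAt ?_
  have hx : 0 < 1 - t := sub_pos.2 (hlt t ht)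
  have hD : 2 * √((1 - p) ^ 2 + 4 * p * (1 - t)) ≠ 0 := by positivity
  unfold SpDeriv
  fun_prop (disch := first | exact hD | exact hx.ne')

theorem hasSum_aCoeff_mul_pow {y : ℝ} (hp : 0 < p) (hy0 : 0 ≤ y) (hy1 : y < 1) :
    HasSum (fun i => aCoeff p i * y ^ i) (Sp p y) := by
  have habs : ∀ t ∈ Set.Icc 0 y, |t| < 1 := fun t ht =>
    (abs_of_nonneg ht.1).trans_lt (ht.2.trans_lt hy1)
  rw [← hasSum_nat_add_iff' 1, Finset.sum_range_one, aCoeff_zero, zero_mul, sub_zero,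
    Sp_eq_integral hp hy1]
  refine (hasSum_div_succ_mul_pow_integral hy0 fun t ht =>
    hasSum_succ_mul_aCoeff_succ_mul_pow hp.le (habs t ht)).congr_fun fun n => ?_
  rw [mul_div_cancel_left₀ _ (by positivity)]

theorem Sp_le_sum_add {y : ℝ} (hp : 0 < p) (hy0 : 0 ≤ y) (hy1 : y < 1) (N : ℕ) :
    Sp p y ≤ ∑ i ∈ Finset.Icc 1 N, aCoeff p i * y ^ i + y ^ (N + 1) / ((N + 1) * (1 - y)) := by
  have hsum : ∑ i ∈ Finset.range (N + 1), aCoeff p i * y ^ i =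
      ∑ i ∈ Finset.Icc 1 N, aCoeff p i * y ^ i := by
    rw [Finset.range_eq_Ico, Finset.sum_eq_sum_Ico_succ_bot N.succ_pos, aCoeff_zero, zero_mul,
      zero_add]
    rfl
  have htail := (hasSum_nat_add_iff' (N + 1)).2 (hasSum_aCoeff_mul_pow hp hy0 hy1)
  have hgeom := (hasSum_geometric_of_lt_one hy0 hy1).mul_left (y ^ (N + 1) / (N + 1))
  rw [← hsum, ← sub_le_iff_le_add', ← div_div, div_eq_mul_inv _ (1 - y)]
  refine hasSum_le (fun i => ?_) htail hgeom
  calc aCoeff p (i + (N + 1)) * y ^ (i + (N + 1))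
      ≤ 1 / (N + 1) * y ^ (i + (N + 1)) := by
        gcongr
        refine (aCoeff_le_one_div hp.le _).trans ?_
        rw [Nat.cast_add, Nat.cast_succ]
        exact one_div_le_one_div_of_le (by positivity) (le_add_of_nonneg_left i.cast_nonneg)
    _ = y ^ (N + 1) / (N + 1) * y ^ i := by ring

end Soliton

section DensityEvolution

variable {p μ : ℝ}

theorem lamBarN_eq_exp (hp : 0 ≤ p) (hμ : 0 ≤ μ) (N : ℕ) (x : ℝ) :
    lamBarN p μ N x =
      exp (-(μ + ∑ i ∈ Finset.Icc 1 N, aCoeff p i * (1 - x) ^ i + (1 - x) ^ N)) := by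
  have hG : 0 ≤ Gpart p N := Finset.sum_nonneg fun i _ => aCoeff_nonneg hp i
  rw [lamBarN, rhoN, neg_mul, mul_div_cancel₀ _ (by positivity)]

theorem lamBarN_pos (p μ : ℝ) (N : ℕ) (x : ℝ) : 0 < lamBarN p μ N x :=
  exp_pos _

theorem monotoneOn_lamBarN (hp : 0 ≤ p) (hμ : 0 ≤ μ) (N : ℕ) :
    MonotoneOn (lamBarN p μ N) (Set.Iic 1) := by
  intro x _ y hy hxy
  have : 0 ≤ 1 - y := sub_nonneg.2 hy
  have ha := aCoeff_nonneg hp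
  simp only [lamBarN_eq_exp hp hμ]
  gcongr
  exact ha _

theorem lamBarN_le_one (hp : 0 ≤ p) (hμ : 0 ≤ μ) (N : ℕ) {x : ℝ} (hx : x ≤ 1) :
    lamBarN p μ N x ≤ 1 := by
  have : 0 ≤ 1 - x := sub_nonneg.2 hx
  have hsum : 0 ≤ ∑ i ∈ Finset.Icc 1 N, aCoeff p i * (1 - x) ^ i :=
    Finset.sum_nonneg fun i _ => mul_nonneg (aCoeff_nonneg hp i) (by positivity)
  rw [lamBarN_eq_exp hp hμ, exp_le_one_iff, neg_nonpos]
  positivity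

theorem continuous_deSym (p μ : ℝ) (N : ℕ) : Continuous (deSym p μ N) := by
  unfold deSym lamBarN rhoN
  fun_prop

theorem monotoneOn_deSym (hp0 : 0 ≤ p) (hp1 : p ≤ 1) (hμ : 0 ≤ μ) (N : ℕ) :
    MonotoneOn (deSym p μ N) (Set.Iic 1) := by
  intro x hx y hy hxy
  have hlam := monotoneOn_lamBarN hp0 hμ N hx hy hxy
  have hx0 := (lamBarN_pos p μ N x).le
  have hy0 := (lamBarN_pos p μ N y).le
  have : 0 ≤ 1 - p := sub_nonneg.2 hp1
  unfold deSym
  gcongr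

theorem mapsTo_deSym (hp0 : 0 ≤ p) (hp1 : p ≤ 1) (hμ : 0 ≤ μ) (N : ℕ) :
    Set.MapsTo (deSym p μ N) (Set.Iic 1) (Set.Icc 0 1) := by
  intro x hx
  have hle := lamBarN_le_one hp0 hμ N hx
  have hpos := (lamBarN_pos p μ N x).le
  have : 0 ≤ 1 - p := sub_nonneg.2 hp1
  refine ⟨by unfold deSym; positivity, mul_le_one₀ ?_ hpos hle⟩
  linarith [mul_le_of_le_one_right hp0 hle]

theorem Sp_one_sub_eq_of_isFixedPt {N : ℕ} {x : ℝ} (hp0 : 0 < p) (hp1 : p ≤ 1) (hμ : 0 ≤ μ)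
    (hfix : Function.IsFixedPt (deSym p μ N) x) :
    Sp p (1 - x) = μ + ∑ i ∈ Finset.Icc 1 N, aCoeff p i * (1 - x) ^ i + (1 - x) ^ N := by
  have hpos := lamBarN_pos p μ N x
  have : 0 ≤ 1 - p := sub_nonneg.2 hp1
  have hq : qp p x = lamBarN p μ N x := qp_eq_of_mul_eq hp0 (by positivity) hfix
  rw [Sp, sub_sub_cancel, hq, lamBarN_eq_exp hp0.le hμ, log_exp, neg_neg]

theorem lt_one_div_of_isFixedPt_deSym {N : ℕ} {x : ℝ} (hp0 : 0 < p) (hp1 : p ≤ 1) (hμ : 0 < μ)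
    (hN : 1 ≤ N) (hx : x ≤ 1) (hfix : Function.IsFixedPt (deSym p μ N) x) : x < 1 / N := by
  have hN0 : (0 : ℝ) < N := by exact_mod_cast hN
  by_contra! hge
  have hx0 : 0 < x := (one_div_pos.2 hN0).trans_le hge
  have hy0 : 0 ≤ 1 - x := sub_nonneg.2 hx
  have htail : (1 - x) ^ (N + 1) / ((N + 1) * x) ≤ (1 - x) ^ N := by
    have hNx : 1 ≤ N * x := (div_le_iff₀' hN0).1 hge
    rw [div_le_iff₀ (by positivity), pow_succ]
    gcongr
    linarith
  have hbound := Sp_le_sum_add hp0 hy0 (by linarith) N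
  rw [sub_sub_cancel, Sp_one_sub_eq_of_isFixedPt hp0 hp1 hμ.le hfix] at hbound
  linarith

end DensityEvolution

theorem stmt10 (p : ℝ) (hp0 : 0 < p) (hp1 : p < 1) (μ : ℝ) (hμ : 0 < μ)
    (N : ℕ) (hN : 1 ≤ N) :
    ContinuousOn (deSym p μ N) (Set.Icc 0 1) ∧
    MonotoneOn (deSym p μ N) (Set.Icc 0 1) ∧
    Set.MapsTo (deSym p μ N) (Set.Icc 0 1) (Set.Icc 0 1) ∧
    Antitone (fun n : ℕ => (deSym p μ N)^[n] 1) ∧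
    ∃ L : ℝ,
      Filter.Tendsto (fun n : ℕ => (deSym p μ N)^[n] 1) Filter.atTop (nhds L) ∧
      deSym p μ N L = L ∧ L < 1 / (N : ℝ) := by
  have hsub : Set.Icc (0 : ℝ) 1 ⊆ Set.Iic 1 := Set.Icc_subset_Iic_self
  have hcont := continuous_deSym p μ N
  have hmono := (monotoneOn_deSym hp0.le hp1.le hμ.le N).mono hsub
  have hmaps := (mapsTo_deSym hp0.le hp1.le hμ.le N).mono_left hsub
  have hone : (1 : ℝ) ∈ Set.Icc 0 1 := ⟨zero_le_one, le_rfl⟩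
  have hmem : ∀ n, (deSym p μ N)^[n] 1 ∈ Set.Icc 0 1 := fun n => hmaps.iterate n hone
  have hanti := antitone_iterate_of_monotoneOn_of_map_le hmono hmaps hone (hmaps hone).2
  refine ⟨hcont.continuousOn, hmono, hmaps, hanti, ?_⟩
  have hlim := tendsto_atTop_ciInf hanti ⟨0, Set.forall_mem_range.2 fun n => (hmem n).1⟩
  have hle := (isClosed_Icc.mem_of_tendsto hlim (Eventually.of_forall hmem)).2
  have hfix := isFixedPt_of_tendsto_iterate hlim hcont.continuousAt
  exact ⟨_, hlim, hfix, lt_one_div_of_isFixedPt_deSym hp0 hp1.le hμ hN hle hfix⟩
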